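/- Let d, M_α, M_β, M_ᾱ, M_β̄ ≥ 1 and let Ψ_α ∈ ℝ^{d×M_α}, Ψ_β ∈ ℝ^{d×M_β}, Ψ_ᾱ ∈ ℝ^{d×M_ᾱ}, Ψ_β̄ ∈ ℝ^{d×M_β̄} be matrices, a ∈ ℝ^{M_α}, ā ∈ ℝ^{M_ᾱ} vectors, and B ∈ ℝ^{M_β×M_β}, B̄ ∈ ℝ^{M_β̄×M_β̄} symmetric positive definite matrices. Define q = N(Ψ_α a, (I + Ψ_β B Ψ_βᵀ)⁻¹) and p = N(Ψ_ᾱ ā, (I + Ψ_β̄ B̄ Ψ_β̄ᵀ)⁻¹). Then KL(q ‖ p) = −(1/2)·tr( (K_β + K_{β,β̄} B̄ K_{β̄,β}) (B⁻¹ + K_β)⁻¹ ) + (1/2)·log det(I + K_β B) + (1/2)·aᵀ (K_α + K_{α,β̄} B̄ K_{β̄,α}) a − aᵀ (K_{α,ᾱ} + K_{α,β̄} B̄ K_{β̄,ᾱ}) ā + C, where C = (1/2)·( tr(K_β̄ B̄) − log det(I + K_β̄ B̄) + āᵀ (K_ᾱ + K_{ᾱ,β̄} B̄ K_{β̄,ᾱ})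 ā ). -/

import Mathlib

open Matrix MeasureTheory

/-- The multivariate Gaussian measure `N(μ, S)` on `ℝ^d`, defined by its
density with respect to the Lebesgue measure. -/
noncomputable def multiGaussian {d : ℕ} (μ : Fin d → ℝ)
    (S : Matrix (Fin d) (Fin d) ℝ) : Measure (Fin d → ℝ) :=
  volume.withDensity fun x =>
    ENNReal.ofReal ((Real.sqrt ((2 * Real.pi) ^ d * S.det))⁻¹ *
      Real.exp (-(1 / 2 : ℝ) * ((x - μ) ⬝ᵥ S⁻¹.mulVec (x - μ))))

/-- The Kullback–Leibler divergence `∫ log (dq/dp) dq` between measures on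
`ℝ^d` (for `q` absolutely continuous with respect to `p`). -/
noncomputable def klDiv {d : ℕ} (q p : Measure (Fin d → ℝ)) : ℝ :=
  ∫ x, Real.log (q.rnDeriv p x).toReal ∂q


/-!
The log-likelihood ratio of two Gaussians is a difference of quadratic forms, and the expectation
of a quadratic form only involves the mean and the covariance: `E[Xᵀ M X] = tr (M Σ) + mᵀ M m`.
Mean and covariance of `N(μ, S)` are known once its density is recognised as the density of
`μ + √S Z` with `Z` standard Gaussian. This gives the divergence in terms of the two precision
matrices; for precisions `I + Ψ B Ψᵀ`, the Woodbury identity and Sylvester's determinant identity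
then express every term through Gram matrices.
-/

open ProbabilityTheory WithLp
open scoped MatrixOrder

section Matrix

variable {R m n k l : Type*} [Fintype n]

theorem posDef_one_add_mul_mul_transpose [Finite m] [DecidableEq m] (Ψ : Matrix m n ℝ)
    {B : Matrix n n ℝ} (hB : B.PosSemidef) : (1 + Ψ * B * Ψᵀ).PosDef := by
  simpa only [conjTranspose_eq_transpose_of_trivial] using
    PosDef.one.add_posSemidef (hB.mul_mul_conjTranspose_same Ψ)

variable [Fintype m]

section CommSemiring

variable [CommSemiring R] [Fintype k] [Fintype l] [DecidableEq m]

theorem mulVec_dotProduct_one_add_mulVec (Φ : Matrix m k R) (Φ' : Matrix m l R)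
    (U : Matrix m n R) (B : Matrix n n R) (V : Matrix n m R) (u : k → R) (v : l → R) :
    Φ *ᵥ u ⬝ᵥ (1 + U * B * V) *ᵥ (Φ' *ᵥ v) =
      u ⬝ᵥ (Φᵀ * Φ' + Φᵀ * U * B * (V * Φ')) *ᵥ v := by
  rw [dotProduct_comm, ← dotProduct_transpose_mulVec, mulVec_mulVec, mulVec_mulVec]
  simp only [Matrix.add_mul, Matrix.mul_add, Matrix.one_mul, Matrix.mul_assoc]

end CommSemiring

section CommRing

variable [CommRing R]

theorem sub_dotProduct_mulVec_sub {P : Matrix m m R} (hP : P.IsSymm) (x y : m → R) :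
    (x - y) ⬝ᵥ P *ᵥ (x - y) = x ⬝ᵥ P *ᵥ x - 2 * (x ⬝ᵥ P *ᵥ y) + y ⬝ᵥ P *ᵥ y := by
  have hswap : y ⬝ᵥ P *ᵥ x = x ⬝ᵥ P *ᵥ y := by
    rw [← dotProduct_transpose_mulVec, hP.eq]
  rw [mulVec_sub, dotProduct_sub, sub_dotProduct, sub_dotProduct, hswap]
  ring

variable [DecidableEq m] [DecidableEq n]

theorem det_one_add_mul_mul (U : Matrix m n R) (B : Matrix n n R) (V : Matrix n m R) :
    (1 + U * B * V).det = (1 + V * U * B).det := by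
  rw [det_one_add_mul_comm, Matrix.mul_assoc]

theorem isUnit_inv_add_mul {U : Matrix m n R} {B : Matrix n n R} {V : Matrix n m R}
    (hB : IsUnit B) (h : IsUnit (1 + U * B * V)) : IsUnit (B⁻¹ + V * U) := by
  have hfactor : (B⁻¹ + V * U) * B = 1 + V * U * B := by
    rw [Matrix.add_mul, nonsing_inv_mul B ((isUnit_iff_isUnit_det B).1 hB)]
  rw [isUnit_iff_isUnit_det, det_one_add_mul_mul, ← hfactor, det_mul] at h
  exact (isUnit_iff_isUnit_det _).2 (isUnit_of_mul_isUnit_left h)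

theorem inv_one_add_mul_mul {U : Matrix m n R} {B : Matrix n n R} {V : Matrix n m R}
    (hB : IsUnit B) (h : IsUnit (1 + U * B * V)) :
    (1 + U * B * V)⁻¹ = 1 - U * (B⁻¹ + V * U)⁻¹ * V := by
  have hcore : IsUnit (B⁻¹ + V * (1 : Matrix m m R)⁻¹ * U) := by
    simpa only [inv_one, Matrix.mul_one] using isUnit_inv_add_mul hB h
  simpa only [inv_one, Matrix.mul_one, Matrix.one_mul] using
    add_mul_mul_inv_eq_sub _ _ _ _ isUnit_one hB hcore

theorem trace_one_add_mul_inv_one_add [Fintype k] {U : Matrix m n R} {B : Matrix n n R}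
    {V : Matrix n m R} (hB : IsUnit B) (h : IsUnit (1 + U * B * V))
    (U' : Matrix m k R) (B' : Matrix k k R) (V' : Matrix k m R) :
    ((1 + U' * B' * V') * (1 + U * B * V)⁻¹).trace =
      Fintype.card m + (V' * U' * B').trace -
        ((V * U + V * U' * B' * (V' * U)) * (B⁻¹ + V * U)⁻¹).trace := by
  have hprior : (1 + U' * B' * V').trace = Fintype.card m + (V' * U' * B').trace := by
    rw [trace_add, trace_one, trace_mul_comm, Matrix.mul_assoc]
  have hcorrection (C : Matrix n n R) :
      ((1 + U' * B' * V') * (U * C * V)).trace =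
        ((V * U + V * U' * B' * (V' * U)) * C).trace := by
    rw [← Matrix.mul_assoc, trace_mul_comm]
    simp only [Matrix.mul_add, Matrix.add_mul, Matrix.one_mul, Matrix.mul_assoc]
  rw [inv_one_add_mul_mul hB h, Matrix.mul_sub, Matrix.mul_one, trace_sub, hprior, hcorrection]

end CommRing

end Matrix

section Measure

variable {α β : Type*} {_ : MeasurableSpace α} {_ : MeasurableSpace β}

theorem map_withDensity_comp (μ : Measure α) {g : α → β} (hg : Measurable g) {f : β → ENNReal}
    (hf : Measurable f) : (μ.withDensity (f ∘ g)).map g = (μ.map g).withDensity f := by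
  ext s hs
  rw [Measure.map_apply hg hs, withDensity_apply _ (hg hs), withDensity_apply _ hs,
    setLIntegral_map hs hf hg]
  rfl

theorem pi_withDensity_ofReal {ι : Type*} [Fintype ι] {α : ι → Type*}
    [∀ i, MeasurableSpace (α i)] {μ : ∀ i, Measure (α i)} [∀ i, SigmaFinite (μ i)]
    {f : ∀ i, α i → ℝ} (hf : ∀ i, Integrable (f i) (μ i)) (hf_nonneg : ∀ i x, 0 ≤ f i x) :
    Measure.pi (fun i => (μ i).withDensity fun x => ENNReal.ofReal (f i x)) =
      (Measure.pi μ).withDensity fun x => ENNReal.ofReal (∏ i, f i (x i)) := by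
  refine Measure.pi_eq fun s hs => ?_
  rw [withDensity_apply _ (MeasurableSet.univ_pi hs), Measure.restrict_pi_pi,
    ← ofReal_integral_eq_lintegral_ofReal
      (Integrable.fintype_prod_dep fun i => (hf i).restrict)
      (ae_of_all _ fun x => Finset.prod_nonneg fun i _ => hf_nonneg i (x i)),
    integral_fintype_prod_eq_prod,
    ENNReal.ofReal_prod_of_nonneg fun i _ => integral_nonneg (hf_nonneg i)]
  refine Finset.prod_congr rfl fun i _ => ?_
  rw [withDensity_apply _ (hs i),
    ofReal_integral_eq_lintegral_ofReal (hf i).restrict (ae_of_all _ (hf_nonneg i))]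

theorem llr_withDensity_ofReal (μ : Measure α) [SigmaFinite μ] {f g : α → ℝ}
    (hf : AEMeasurable f μ) (hg : AEMeasurable g μ) (hf_pos : ∀ᵐ x ∂μ, 0 < f x)
    (hg_pos : ∀ᵐ x ∂μ, 0 < g x) :
    llr (μ.withDensity fun x => ENNReal.ofReal (f x))
        (μ.withDensity fun x => ENNReal.ofReal (g x)) =ᵐ[μ]
      fun x => Real.log (f x) - Real.log (g x) := by
  filter_upwards [Measure.rnDeriv_withDensity_right
      (μ.withDensity fun x => ENNReal.ofReal (f x)) μ hg.ennreal_ofReal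
      (hg_pos.mono fun _ hx => (ENNReal.ofReal_pos.2 hx).ne')
      (ae_of_all _ fun _ => ENNReal.ofReal_ne_top),
    Measure.rnDeriv_withDensity₀ μ hf.ennreal_ofReal, hf_pos, hg_pos] with x hright hleft hfx hgx
  rw [llr, hright, hleft, ENNReal.toReal_mul, ENNReal.toReal_inv, ENNReal.toReal_ofReal hfx.le,
    ENNReal.toReal_ofReal hgx.le, Real.log_mul (inv_pos.2 hgx).ne' hfx.ne', Real.log_inv,
    neg_add_eq_sub]

end Measure

section QuadraticForm

variable {Ω ι : Type*} {_ : MeasurableSpace Ω} {P : Measure Ω} [Fintype ι] {X : Ω → ι → ℝ}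

theorem dotProduct_mulVec_eq_sum (M : Matrix ι ι ℝ) (x : ι → ℝ) :
    x ⬝ᵥ M *ᵥ x = ∑ i, ∑ j, M i j * (x i * x j) := by
  simp only [dotProduct, mulVec, Finset.mul_sum]
  exact Finset.sum_congr rfl fun i _ => Finset.sum_congr rfl fun j _ => by ring

theorem integrable_dotProduct_mulVec (hX : ∀ i, MemLp (fun ω => X ω i) 2 P) (M : Matrix ι ι ℝ) :
    Integrable (fun ω => X ω ⬝ᵥ M *ᵥ X ω) P := by
  simp only [dotProduct_mulVec_eq_sum]
  exact integrable_finsetSum _ fun i _ => integrable_finsetSum _ fun j _ =>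
    ((hX i).integrable_mul (hX j)).const_mul _

theorem integral_dotProduct_mulVec [IsProbabilityMeasure P]
    (hX : ∀ i, MemLp (fun ω => X ω i) 2 P) (M : Matrix ι ι ℝ) :
    ∫ ω, X ω ⬝ᵥ M *ᵥ X ω ∂P =
      (M * Matrix.of fun i j => cov[fun ω => X ω i, fun ω => X ω j; P]).trace +
        (fun i => ∫ ω, X ω i ∂P) ⬝ᵥ M *ᵥ fun i => ∫ ω, X ω i ∂P := by
  have hint (i j : ι) : Integrable (fun ω => M i j * (X ω i * X ω j)) P :=
    ((hX i).integrable_mul (hX j)).const_mul _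
  have hmoment (i j : ι) : ∫ ω, X ω i * X ω j ∂P =
      cov[fun ω => X ω j, fun ω => X ω i; P] + (∫ ω, X ω i ∂P) * ∫ ω, X ω j ∂P := by
    rw [covariance_comm, covariance_eq_sub (hX i) (hX j)]
    exact (sub_add_cancel _ _).symm
  simp only [dotProduct_mulVec_eq_sum]
  rw [integral_finsetSum _ fun i _ => integrable_finsetSum _ fun j _ => hint i j]
  simp only [integral_finsetSum _ fun j _ => hint _ j, integral_const_mul, hmoment, mul_add,
    Finset.sum_add_distrib, trace, diag, mul_apply, of_apply]

end QuadraticForm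

section MultiGaussian

variable {d : ℕ}

/-- The Lebesgue density of `multiGaussian μ S`; the multivariate analogue of
`gaussianPDFReal`. -/
noncomputable def multiGaussianPDFReal (μ : Fin d → ℝ) (S : Matrix (Fin d) (Fin d) ℝ)
    (x : Fin d → ℝ) : ℝ :=
  (√((2 * Real.pi) ^ d * S.det))⁻¹ * Real.exp (-(1 / 2 : ℝ) * ((x - μ) ⬝ᵥ S⁻¹ *ᵥ (x - μ)))

theorem multiGaussian_eq_withDensity (μ : Fin d → ℝ) (S : Matrix (Fin d) (Fin d) ℝ) :
    multiGaussian μ S = volume.withDensity fun x => ENNReal.ofReal (multiGaussianPDFReal μ S x) :=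
  rfl

theorem measurable_multiGaussianPDFReal (μ : Fin d → ℝ) (S : Matrix (Fin d) (Fin d) ℝ) :
    Measurable (multiGaussianPDFReal μ S) := by
  refine Continuous.measurable ?_
  unfold multiGaussianPDFReal
  fun_prop

theorem two_pi_pow_mul_det_pos {S : Matrix (Fin d) (Fin d) ℝ} (hS : S.PosDef) :
    0 < (2 * Real.pi) ^ d * S.det :=
  mul_pos (pow_pos Real.two_pi_pos d) hS.det_pos

theorem multiGaussianPDFReal_pos (μ : Fin d → ℝ) {S : Matrix (Fin d) (Fin d) ℝ} (hS : S.PosDef)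
    (x : Fin d → ℝ) : 0 < multiGaussianPDFReal μ S x :=
  mul_pos (inv_pos.2 (Real.sqrt_pos.2 (two_pi_pow_mul_det_pos hS))) (Real.exp_pos _)

theorem log_multiGaussianPDFReal (μ : Fin d → ℝ) {S : Matrix (Fin d) (Fin d) ℝ} (hS : S.PosDef)
    (x : Fin d → ℝ) :
    Real.log (multiGaussianPDFReal μ S x) =
      -(1 / 2 : ℝ) * (Real.log ((2 * Real.pi) ^ d) + Real.log S.det +
        (x - μ) ⬝ᵥ S⁻¹ *ᵥ (x - μ)) := by
  have hnorm := two_pi_pow_mul_det_pos hS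
  rw [multiGaussianPDFReal,
    Real.log_mul (inv_pos.2 (Real.sqrt_pos.2 hnorm)).ne' (Real.exp_pos _).ne', Real.log_exp,
    Real.log_inv, Real.log_sqrt hnorm.le,
    Real.log_mul (pow_pos Real.two_pi_pos d).ne' hS.det_pos.ne']
  ring

theorem prod_gaussianPDFReal (x : Fin d → ℝ) :
    ∏ i, gaussianPDFReal 0 1 (x i) = multiGaussianPDFReal 0 1 x := by
  simp only [gaussianPDFReal, Finset.prod_mul_distrib, ← Real.exp_sum, multiGaussianPDFReal,
    inv_one, one_mulVec, sub_zero, det_one, mul_one, NNReal.coe_one, Finset.prod_const,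
    Finset.card_univ, Fintype.card_fin, inv_pow, dotProduct, Finset.mul_sum]
  congr 2
  · simp only [Real.sqrt_eq_rpow, ← Real.rpow_pow_comm Real.two_pi_pos.le]
  · exact Finset.sum_congr rfl fun i _ => by ring

theorem pi_gaussianReal_eq_multiGaussian :
    Measure.pi (fun _ : Fin d => gaussianReal 0 1) = multiGaussian 0 1 := by
  rw [multiGaussian_eq_withDensity, gaussianReal_of_var_ne_zero 0 one_ne_zero, gaussianPDF_def,
    pi_withDensity_ofReal (fun _ => integrable_gaussianPDFReal 0 1)
      fun _ => gaussianPDFReal_nonneg 0 1]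
  simp only [prod_gaussianPDFReal, volume_pi]

theorem map_add_mulVec_volume (μ : Fin d → ℝ) {A : Matrix (Fin d) (Fin d) ℝ} (hA : A.det ≠ 0) :
    (volume : Measure (Fin d → ℝ)).map (fun z => μ + A *ᵥ z) =
      ENNReal.ofReal |A.det⁻¹| • volume := by
  have hlin : Measurable (toLin' A) := (toLin' A).continuous_of_finiteDimensional.measurable
  change volume.map ((fun x => μ + x) ∘ toLin' A) = _
  rw [← Measure.map_map (measurable_const_add μ) hlin,
    Real.map_matrix_volume_pi_eq_smul_volume_pi hA, Measure.map_smul, map_add_left_eq_self]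

theorem multiGaussianPDFReal_eq_abs_det_mul (μ ν : Fin d → ℝ) (S : Matrix (Fin d) (Fin d) ℝ)
    {A : Matrix (Fin d) (Fin d) ℝ} (hA : A.det ≠ 0) (z : Fin d → ℝ) :
    multiGaussianPDFReal ν S z =
      |A.det| * multiGaussianPDFReal (μ + A *ᵥ ν) (A * S * Aᵀ) (μ + A *ᵥ z) := by
  have hu : IsUnit A.det := hA.isUnit
  have hexponent (w : Fin d → ℝ) : A *ᵥ w ⬝ᵥ (A * S * Aᵀ)⁻¹ *ᵥ (A *ᵥ w) = w ⬝ᵥ S⁻¹ *ᵥ w := by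
    have hinv : Aᵀ * ((A * S * Aᵀ)⁻¹ * A) = S⁻¹ := by
      rw [Matrix.mul_inv_rev, Matrix.mul_inv_rev, Matrix.mul_assoc, Matrix.mul_assoc,
        nonsing_inv_mul A hu, Matrix.mul_one,
        mul_nonsing_inv_cancel_left _ _ (by rwa [det_transpose])]
    rw [mulVec_mulVec, dotProduct_comm, ← dotProduct_transpose_mulVec, mulVec_mulVec, hinv]
  have hnorm : √((2 * Real.pi) ^ d * (A * S * Aᵀ).det) =
      |A.det| * √((2 * Real.pi) ^ d * S.det) := by
    rw [det_mul, det_mul, det_transpose, ← Real.sqrt_sq_eq_abs, ← Real.sqrt_mul (sq_nonneg _)]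
    congr 1
    ring
  rw [multiGaussianPDFReal, multiGaussianPDFReal, add_sub_add_left_eq_sub, ← mulVec_sub,
    hexponent, hnorm, mul_inv, ← mul_assoc, mul_inv_cancel_left₀ (abs_ne_zero.2 hA)]

theorem map_add_mulVec_multiGaussian (μ ν : Fin d → ℝ) (S : Matrix (Fin d) (Fin d) ℝ)
    {A : Matrix (Fin d) (Fin d) ℝ} (hA : A.det ≠ 0) :
    (multiGaussian ν S).map (fun z => μ + A *ᵥ z) =
      multiGaussian (μ + A *ᵥ ν) (A * S * Aᵀ) := by
  set f : (Fin d → ℝ) → ℝ := multiGaussianPDFReal (μ + A *ᵥ ν) (A * S * Aᵀ)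
  have hmeas : Measurable fun x => ENNReal.ofReal |A.det| * ENNReal.ofReal (f x) :=
    (measurable_multiGaussianPDFReal _ _).ennreal_ofReal.const_mul _
  have hdensity : (fun z => ENNReal.ofReal (multiGaussianPDFReal ν S z)) =
      (fun x => ENNReal.ofReal |A.det| * ENNReal.ofReal (f x)) ∘ fun z => μ + A *ᵥ z := by
    funext z
    rw [multiGaussianPDFReal_eq_abs_det_mul μ ν S hA, ENNReal.ofReal_mul (abs_nonneg _)]
    rfl
  have hcancel : ENNReal.ofReal |A.det⁻¹| * ENNReal.ofReal |A.det| = 1 := by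
    rw [← ENNReal.ofReal_mul (abs_nonneg _), ← abs_mul, inv_mul_cancel₀ hA, abs_one,
      ENNReal.ofReal_one]
  rw [multiGaussian_eq_withDensity, hdensity, map_withDensity_comp _ (by fun_prop) hmeas,
    map_add_mulVec_volume μ hA, withDensity_smul_measure, ← withDensity_smul _ hmeas,
    multiGaussian_eq_withDensity]
  congr 1
  funext x
  rw [Pi.smul_apply, smul_eq_mul, ← mul_assoc, hcancel, one_mul]

theorem measurePreserving_ofLp_multiGaussian (μ : Fin d → ℝ) {S : Matrix (Fin d) (Fin d) ℝ}
    (hS : S.PosDef) :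
    MeasurePreserving ofLp (multivariateGaussian (toLp 2 μ) S) (multiGaussian μ S) where
  measurable := by fun_prop
  map_eq := by
    set A := CFC.sqrt S
    have hA_mul : A * A = S := CFC.sqrt_mul_sqrt_self S hS.posSemidef.nonneg
    have hA_symm : Aᵀ = A :=
      (isHermitian_iff_isSymm.1 (nonneg_iff_posSemidef.1 (CFC.sqrt_nonneg S)).isHermitian).eq
    have hA_det : A.det ≠ 0 := by
      refine fun h => hS.det_pos.ne' ?_
      rw [← hA_mul, det_mul, h, zero_mul]
    have hcomp : (ofLp ∘ fun x => toLp 2 μ + toEuclideanCLM (𝕜 := ℝ) A x) ∘ toLp 2 =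
        fun z => μ + A *ᵥ z := by
      funext z
      simp only [Function.comp_apply, ofLp_add, ofLp_toEuclideanCLM]
    rw [multivariateGaussian, ← map_pi_eq_stdGaussian, Measure.map_map (by fun_prop) (by fun_prop),
      Measure.map_map (by fun_prop) (by fun_prop), hcomp, pi_gaussianReal_eq_multiGaussian,
      map_add_mulVec_multiGaussian μ 0 1 hA_det, mulVec_zero, add_zero, Matrix.mul_one, hA_symm,
      hA_mul]

section Moments

variable (μ c : Fin d → ℝ) {S : Matrix (Fin d) (Fin d) ℝ}

theorem isProbabilityMeasure_multiGaussian (hS : S.PosDef) :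
    IsProbabilityMeasure (multiGaussian μ S) := by
  rw [← (measurePreserving_ofLp_multiGaussian μ hS).map_eq]
  exact Measure.isProbabilityMeasure_map (by fun_prop)

theorem memLp_eval_multiGaussian (hS : S.PosDef) (i : Fin d) :
    MemLp (fun x => x i) 2 (multiGaussian μ S) := by
  rw [← (measurePreserving_ofLp_multiGaussian μ hS).map_eq]
  exact (memLp_map_measure_iff (measurable_pi_apply i).aestronglyMeasurable (by fun_prop)).2
    ((EuclideanSpace.proj (𝕜 := ℝ) i).comp_memLp' IsGaussian.memLp_two_id)

theorem integral_eval_multiGaussian (hS : S.PosDef) (i : Fin d) :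
    ∫ x, x i ∂multiGaussian μ S = μ i := by
  have hmean := (EuclideanSpace.proj (𝕜 := ℝ) i).integral_comp_id_comm
    (IsGaussian.integrable_id (μ := multivariateGaussian (toLp 2 μ) S))
  rw [integral_id_multivariateGaussian] at hmean
  rw [← (measurePreserving_ofLp_multiGaussian μ hS).map_eq]
  exact (integral_map (measurePreserving_ofLp_multiGaussian μ hS).measurable.aemeasurable
    (measurable_pi_apply i).aestronglyMeasurable).trans hmean

theorem covariance_eval_multiGaussian (hS : S.PosDef) (i j : Fin d) :
    cov[fun x => x i, fun x => x j; multiGaussian μ S] = S i j := by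
  rw [← (measurePreserving_ofLp_multiGaussian μ hS).map_eq,
    covariance_map_fun (measurable_pi_apply i).aestronglyMeasurable
      (measurable_pi_apply j).aestronglyMeasurable (by fun_prop)]
  exact covariance_eval_multivariateGaussian hS.posSemidef i j

theorem memLp_sub_eval_multiGaussian (hS : S.PosDef) (i : Fin d) :
    MemLp (fun x => (x - c) i) 2 (multiGaussian μ S) :=
  have := isProbabilityMeasure_multiGaussian μ hS
  (memLp_eval_multiGaussian μ hS i).sub (memLp_const (c i))

theorem integral_sub_dotProduct_mulVec_sub_multiGaussian (hS : S.PosDef)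
    (M : Matrix (Fin d) (Fin d) ℝ) :
    ∫ x, (x - c) ⬝ᵥ M *ᵥ (x - c) ∂multiGaussian μ S =
      (M * S).trace + (μ - c) ⬝ᵥ M *ᵥ (μ - c) := by
  have := isProbabilityMeasure_multiGaussian μ hS
  have hint (i : Fin d) : Integrable (fun x => x i) (multiGaussian μ S) :=
    (memLp_eval_multiGaussian μ hS i).integrable one_le_two
  have hmean : (fun i => ∫ x, (x - c) i ∂multiGaussian μ S) = μ - c := by
    funext i
    simp only [Pi.sub_apply]
    rw [integral_sub (hint i) (integrable_const _), integral_eval_multiGaussian μ hS,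
      integral_const, probReal_univ, one_smul]
  have hcov : (Matrix.of fun i j =>
      cov[fun x => (x - c) i, fun x => (x - c) j; multiGaussian μ S]) = S := by
    ext i j
    simp only [of_apply, Pi.sub_apply, covariance_sub_const_left (hint i),
      covariance_sub_const_right (hint j), covariance_eval_multiGaussian μ hS]
  rw [integral_dotProduct_mulVec (memLp_sub_eval_multiGaussian μ c hS), hmean, hcov]

end Moments

section KLDivergence

variable (μ μ' : Fin d → ℝ)

theorem llr_multiGaussian {S S' : Matrix (Fin d) (Fin d) ℝ} (hS : S.PosDef) (hS' : S'.PosDef) :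
    llr (multiGaussian μ S) (multiGaussian μ' S') =ᵐ[volume] fun x =>
      1 / 2 * (Real.log S'.det - Real.log S.det +
        ((x - μ') ⬝ᵥ S'⁻¹ *ᵥ (x - μ') - (x - μ) ⬝ᵥ S⁻¹ *ᵥ (x - μ))) := by
  filter_upwards [llr_withDensity_ofReal volume
    (measurable_multiGaussianPDFReal μ S).aemeasurable
    (measurable_multiGaussianPDFReal μ' S').aemeasurable
    (ae_of_all _ (multiGaussianPDFReal_pos μ hS))
    (ae_of_all _ (multiGaussianPDFReal_pos μ' hS'))] with x hx
  rw [multiGaussian_eq_withDensity, multiGaussian_eq_withDensity, hx,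
    log_multiGaussianPDFReal μ hS, log_multiGaussianPDFReal μ' hS']
  ring

theorem klDiv_multiGaussian {S S' : Matrix (Fin d) (Fin d) ℝ} (hS : S.PosDef) (hS' : S'.PosDef) :
    klDiv (multiGaussian μ S) (multiGaussian μ' S') =
      1 / 2 * (Real.log S'.det - Real.log S.det - d + (S'⁻¹ * S).trace +
        (μ - μ') ⬝ᵥ S'⁻¹ *ᵥ (μ - μ')) := by
  have := isProbabilityMeasure_multiGaussian μ hS
  have hac : multiGaussian μ S ≪ volume := withDensity_absolutelyContinuous _ _
  have hint (c : Fin d → ℝ) (M : Matrix (Fin d) (Fin d) ℝ) :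
      Integrable (fun x => (x - c) ⬝ᵥ M *ᵥ (x - c)) (multiGaussian μ S) :=
    integrable_dotProduct_mulVec (memLp_sub_eval_multiGaussian μ c hS) M
  have hint_sub : Integrable (fun x => (x - μ') ⬝ᵥ S'⁻¹ *ᵥ (x - μ') - (x - μ) ⬝ᵥ S⁻¹ *ᵥ (x - μ))
      (multiGaussian μ S) := (hint _ _).sub (hint _ _)
  have hself : (S⁻¹ * S).trace = d := by
    rw [nonsing_inv_mul S hS.det_pos.ne'.isUnit, trace_one, Fintype.card_fin]
  calc klDiv (multiGaussian μ S) (multiGaussian μ' S')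
      = ∫ x, 1 / 2 * (Real.log S'.det - Real.log S.det +
          ((x - μ') ⬝ᵥ S'⁻¹ *ᵥ (x - μ') - (x - μ) ⬝ᵥ S⁻¹ *ᵥ (x - μ))) ∂multiGaussian μ S :=
        integral_congr_ae (hac.ae_le (llr_multiGaussian μ μ' hS hS'))
    _ = 1 / 2 * (Real.log S'.det - Real.log S.det +
          (∫ x, (x - μ') ⬝ᵥ S'⁻¹ *ᵥ (x - μ') ∂multiGaussian μ S -
            ∫ x, (x - μ) ⬝ᵥ S⁻¹ *ᵥ (x - μ) ∂multiGaussian μ S)) := by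
        rw [integral_const_mul, integral_add (integrable_const _) hint_sub,
          integral_sub (hint _ _) (hint _ _), integral_const, probReal_univ, one_smul]
    _ = _ := by
        simp only [integral_sub_dotProduct_mulVec_sub_multiGaussian μ _ hS, hself, sub_self,
          zero_dotProduct]
        ring

theorem klDiv_multiGaussian_inv {P P' : Matrix (Fin d) (Fin d) ℝ} (hP : P.PosDef)
    (hP' : P'.PosDef) :
    klDiv (multiGaussian μ P⁻¹) (multiGaussian μ' P'⁻¹) =
      1 / 2 * (Real.log P.det - Real.log P'.det - d + (P' * P⁻¹).trace +
        (μ - μ') ⬝ᵥ P' *ᵥ (μ - μ')) := by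
  rw [klDiv_multiGaussian μ μ' hP.inv hP'.inv,
    nonsing_inv_nonsing_inv _ hP'.det_pos.ne'.isUnit, det_nonsing_inv, det_nonsing_inv,
    Ring.inverse_eq_inv', Real.log_inv, Real.log_inv]
  ring

end KLDivergence

end MultiGaussian

theorem stmt_1_general {d : ℕ} {α β α' β' : Type*} [Fintype α] [Fintype β] [Fintype α']
    [Fintype β'] [DecidableEq β] [DecidableEq β'] (Ψα : Matrix (Fin d) α ℝ)
    (Ψβ : Matrix (Fin d) β ℝ) (Ψα' : Matrix (Fin d) α' ℝ) (Ψβ' : Matrix (Fin d) β' ℝ)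
    (a : α → ℝ) (a' : α' → ℝ) {B : Matrix β β ℝ} {B' : Matrix β' β' ℝ} (hB : IsUnit B)
    (hP : (1 + Ψβ * B * Ψβᵀ).PosDef) (hP' : (1 + Ψβ' * B' * Ψβ'ᵀ).PosDef) :
    klDiv (multiGaussian (Ψα *ᵥ a) (1 + Ψβ * B * Ψβᵀ)⁻¹)
        (multiGaussian (Ψα' *ᵥ a') (1 + Ψβ' * B' * Ψβ'ᵀ)⁻¹) =
      -(1 / 2) * ((Ψβᵀ * Ψβ + Ψβᵀ * Ψβ' * B' * (Ψβ'ᵀ * Ψβ)) * (B⁻¹ + Ψβᵀ * Ψβ)⁻¹).trace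
        + 1 / 2 * Real.log (1 + Ψβᵀ * Ψβ * B).det
        + 1 / 2 * (a ⬝ᵥ (Ψαᵀ * Ψα + Ψαᵀ * Ψβ' * B' * (Ψβ'ᵀ * Ψα)) *ᵥ a)
        - a ⬝ᵥ (Ψαᵀ * Ψα' + Ψαᵀ * Ψβ' * B' * (Ψβ'ᵀ * Ψα')) *ᵥ a'
        + 1 / 2 * ((Ψβ'ᵀ * Ψβ' * B').trace - Real.log (1 + Ψβ'ᵀ * Ψβ' * B').det
          + a' ⬝ᵥ (Ψα'ᵀ * Ψα' + Ψα'ᵀ * Ψβ' * B' * (Ψβ'ᵀ * Ψα')) *ᵥ a') := by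
  rw [klDiv_multiGaussian_inv _ _ hP hP', det_one_add_mul_mul, det_one_add_mul_mul,
    trace_one_add_mul_inv_one_add hB hP.isUnit,
    sub_dotProduct_mulVec_sub (isHermitian_iff_isSymm.1 hP'.isHermitian)]
  simp only [mulVec_dotProduct_one_add_mulVec, Fintype.card_fin]
  ring

/-- closed form of the KL divergence between two
subspace-parametrized Gaussian measures
`q = N(Ψα a, (I + Ψβ B Ψβᵀ)⁻¹)` and `p = N(Ψᾱ ā, (I + Ψβ̄ B̄ Ψβ̄ᵀ)⁻¹)`,
where `K_{1,2} = Ψ₁ᵀ Ψ₂` denote the Gram matrices. -/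
theorem stmt_1 (d Mα Mβ Mα' Mβ' : ℕ) (hd : 1 ≤ d) (hMα : 1 ≤ Mα)
    (hMβ : 1 ≤ Mβ) (hMα' : 1 ≤ Mα') (hMβ' : 1 ≤ Mβ')
    (Ψα : Matrix (Fin d) (Fin Mα) ℝ) (Ψβ : Matrix (Fin d) (Fin Mβ) ℝ)
    (Ψα' : Matrix (Fin d) (Fin Mα') ℝ) (Ψβ' : Matrix (Fin d) (Fin Mβ') ℝ)
    (a : Fin Mα → ℝ) (a' : Fin Mα' → ℝ)
    (B : Matrix (Fin Mβ) (Fin Mβ) ℝ) (B' : Matrix (Fin Mβ') (Fin Mβ') ℝ)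
    (hB : B.PosDef) (hB' : B'.PosDef) :
    klDiv (multiGaussian (Ψα.mulVec a) ((1 + Ψβ * B * Ψβᵀ)⁻¹))
        (multiGaussian (Ψα'.mulVec a') ((1 + Ψβ' * B' * Ψβ'ᵀ)⁻¹)) =
      -(1 / 2 : ℝ) *
          (((Ψβᵀ * Ψβ + (Ψβᵀ * Ψβ') * B' * (Ψβ'ᵀ * Ψβ)) *
            (B⁻¹ + Ψβᵀ * Ψβ)⁻¹).trace)
        + (1 / 2 : ℝ) * Real.log (1 + (Ψβᵀ * Ψβ) * B).det
        + (1 / 2 : ℝ) *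
            (a ⬝ᵥ (Ψαᵀ * Ψα + (Ψαᵀ * Ψβ') * B' * (Ψβ'ᵀ * Ψα)).mulVec a)
        - a ⬝ᵥ (Ψαᵀ * Ψα' + (Ψαᵀ * Ψβ') * B' * (Ψβ'ᵀ * Ψα')).mulVec a'
        + (1 / 2 : ℝ) *
            (((Ψβ'ᵀ * Ψβ') * B').trace
              - Real.log (1 + (Ψβ'ᵀ * Ψβ') * B').det
              + a' ⬝ᵥ (Ψα'ᵀ * Ψα'
                  + (Ψα'ᵀ * Ψβ') * B' * (Ψβ'ᵀ * Ψα')).mulVec a') :=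
  stmt_1_general Ψα Ψβ Ψα' Ψβ' a a' hB.isUnit
    (posDef_one_add_mul_mul_transpose Ψβ hB.posSemidef)
    (posDef_one_add_mul_mul_transpose Ψβ' hB'.posSemidef)
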